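/- Assume Π > 0 and Γ > 0 at every (x,y) ∈ U × (ℝⁿ∖{0}), and set D^i = 2G^i − 2·^αG^i, where G^i are the spray coefficients of F. Then at every (x,y): Ψ_s·^βr_00 + Ψ_s̄·^γr_00 = ℓ_r·D^r, where ℓ_r = ∂F/∂y^r. -/

import Mathlib

noncomputable section

open Set

/-- `a^{ij} u_i v_j` : the pairing of two covectors via the inverse matrix. -/
def quadInv {n : ℕ} (a : Matrix (Fin n) (Fin n) ℝ) (u v : Fin n → ℝ) : ℝ :=
  ∑ i, ∑ j, a⁻¹ i j * u i * v j

/-- `α(y) = √(a_{ij} y^i y^j)`. -/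
def alph {n : ℕ} (a : Matrix (Fin n) (Fin n) ℝ) (y : Fin n → ℝ) : ℝ :=
  Real.sqrt (∑ i, ∑ j, a i j * y i * y j)

/-- `v_i y^i`. -/
def oneForm {n : ℕ} (v y : Fin n → ℝ) : ℝ := ∑ i, v i * y i

/-- `s(y) = v_i y^i / α(y)`. -/
def sVar {n : ℕ} (a : Matrix (Fin n) (Fin n) ℝ) (v y : Fin n → ℝ) : ℝ :=
  oneForm v y / alph a y

/-- The (α,β,γ)-metric `F(y) = α·Ψ(s, s̄)`. -/
def Fm {n : ℕ} (a : Matrix (Fin n) (Fin n) ℝ) (bv gv : Fin n → ℝ)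
    (Ψ : ℝ → ℝ → ℝ) (y : Fin n → ℝ) : ℝ :=
  alph a y * Ψ (sVar a bv y) (sVar a gv y)

/-- Partial derivative of a function on `ℝⁿ` in the `i`-th coordinate direction. -/
def pd {n : ℕ} (f : (Fin n → ℝ) → ℝ) (y : Fin n → ℝ) (i : Fin n) : ℝ :=
  fderiv ℝ f y (Pi.single i 1)

/-- Second partial derivative. -/
def pd2 {n : ℕ} (f : (Fin n → ℝ) → ℝ) (y : Fin n → ℝ) (i j : Fin n) : ℝ :=
  pd (fun z => pd f z j) y i

/-- Partial derivative with respect to the first slot (`∂/∂s`). -/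
def Ds (Ψ : ℝ → ℝ → ℝ) : ℝ → ℝ → ℝ := fun p q => deriv (fun u => Ψ u q) p

/-- Partial derivative with respect to the second slot (`∂/∂s̄`). -/
def Dt (Ψ : ℝ → ℝ → ℝ) : ℝ → ℝ → ℝ := fun p q => deriv (fun v => Ψ p v) q

/-- `h_i = v_i − s·α_i`. -/
def hl {n : ℕ} (a : Matrix (Fin n) (Fin n) ℝ) (v y : Fin n → ℝ) (i : Fin n) : ℝ :=
  v i - sVar a v y * pd (alph a) y i

/-- Fundamental tensor `g_{ij} = ½ ∂²(F²)/∂yⁱ∂yʲ`. -/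
def fundT {n : ℕ} (F : (Fin n → ℝ) → ℝ) (y : Fin n → ℝ) (i j : Fin n) : ℝ :=
  (1 / 2) * pd2 (fun z => F z ^ 2) y i j

/-- `Π = Ψ − sΨ_s − s̄Ψ_s̄`. -/
def PiF (Ψ : ℝ → ℝ → ℝ) (p q : ℝ) : ℝ := Ψ p q - p * Ds Ψ p q - q * Dt Ψ p q

/-- `J = (Ψ_ss Ψ_s̄s̄ − Ψ_ss̄²)/Π`. -/
def JF (Ψ : ℝ → ℝ → ℝ) (p q : ℝ) : ℝ :=
  (Ds (Ds Ψ) p q * Dt (Dt Ψ) p q - Dt (Ds Ψ) p q ^ 2) / PiF Ψ p q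

/-- `Γ`, with `B = b²`, `G = g²`, `Θ = θ` as real parameters. -/
def GammaF (Ψ : ℝ → ℝ → ℝ) (B G Θ p q : ℝ) : ℝ :=
  PiF Ψ p q + (B - p ^ 2) * Ds (Ds Ψ) p q + (G - q ^ 2) * Dt (Dt Ψ) p q
    + 2 * (Θ - p * q) * Dt (Ds Ψ) p q
    + ((B - p ^ 2) * (G - q ^ 2) - (Θ - p * q) ^ 2) * JF Ψ p q

/-- `ρ = Ψ(Ψ − sΨ_s − s̄Ψ_s̄)`. -/
def rhoF (Ψ : ℝ → ℝ → ℝ) : ℝ → ℝ → ℝ := fun p q => Ψ p q * PiF Ψ p q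

/-- `ρ₀ = ΨΨ_ss + Ψ_s²`. -/
def rho0F (Ψ : ℝ → ℝ → ℝ) : ℝ → ℝ → ℝ := fun p q => Ψ p q * Ds (Ds Ψ) p q + Ds Ψ p q ^ 2

/-- `ρ̄₀ = ΨΨ_s̄s̄ + Ψ_s̄²`. -/
def rhobar0F (Ψ : ℝ → ℝ → ℝ) : ℝ → ℝ → ℝ := fun p q => Ψ p q * Dt (Dt Ψ) p q + Dt Ψ p q ^ 2

/-- `ρ₃ = ΨΨ_ss̄ + Ψ_sΨ_s̄`. -/
def rho3F (Ψ : ℝ → ℝ → ℝ) : ℝ → ℝ → ℝ :=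
  fun p q => Ψ p q * Dt (Ds Ψ) p q + Ds Ψ p q * Dt Ψ p q

/-- `ρ₁ = ΨΨ_s − sρ₀ − s̄ρ₃`. -/
def rho1F (Ψ : ℝ → ℝ → ℝ) : ℝ → ℝ → ℝ :=
  fun p q => Ψ p q * Ds Ψ p q - p * rho0F Ψ p q - q * rho3F Ψ p q

/-- `ρ̄₁ = ΨΨ_s̄ − s̄ρ̄₀ − sρ₃`. -/
def rhobar1F (Ψ : ℝ → ℝ → ℝ) : ℝ → ℝ → ℝ :=
  fun p q => Ψ p q * Dt Ψ p q - q * rhobar0F Ψ p q - p * rho3F Ψ p q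

/-- `ρ₂ = −sρ₁ − s̄ρ̄₁`. -/
def rho2F (Ψ : ℝ → ℝ → ℝ) : ℝ → ℝ → ℝ :=
  fun p q => -p * rho1F Ψ p q - q * rhobar1F Ψ p q

/-- `π₁ = Ψ_s̄Ψ_ss̄ − Ψ_sΨ_s̄s̄ + sΨJ`. -/
def pi1F (Ψ : ℝ → ℝ → ℝ) (p q : ℝ) : ℝ :=
  Dt Ψ p q * Dt (Ds Ψ) p q - Ds Ψ p q * Dt (Dt Ψ) p q + p * Ψ p q * JF Ψ p q

/-- `π₂ = Ψ_sΨ_ss̄ − Ψ_s̄Ψ_ss + s̄ΨJ`. -/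
def pi2F (Ψ : ℝ → ℝ → ℝ) (p q : ℝ) : ℝ :=
  Ds Ψ p q * Dt (Ds Ψ) p q - Dt Ψ p q * Ds (Ds Ψ) p q + q * Ψ p q * JF Ψ p q


/-- Christoffel symbols `Γ^k_{ij}` of the Riemannian metric `a_{ij}(x)`. -/
def chr {n : ℕ} (a : (Fin n → ℝ) → Matrix (Fin n) (Fin n) ℝ) (x : Fin n → ℝ)
    (k i j : Fin n) : ℝ :=
  (1 / 2) * ∑ l, (a x)⁻¹ k l *
    (pd (fun z => a z j l) x i + pd (fun z => a z i l) x j - pd (fun z => a z i j) x l)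

/-- Geodesic coefficients `^αG^i = ½ Γ^i_{jk} y^j y^k` of `α`. -/
def alphaG {n : ℕ} (a : (Fin n → ℝ) → Matrix (Fin n) (Fin n) ℝ) (x y : Fin n → ℝ)
    (i : Fin n) : ℝ :=
  (1 / 2) * ∑ j, ∑ k, chr a x i j k * y j * y k

/-- Covariant derivative `v_{i|j}` of a 1-form `v` with respect to `α`. -/
def covD {n : ℕ} (a : (Fin n → ℝ) → Matrix (Fin n) (Fin n) ℝ)
    (v : (Fin n → ℝ) → Fin n → ℝ) (x : Fin n → ℝ) (i j : Fin n) : ℝ :=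
  pd (fun z => v z i) x j - ∑ k, v x k * chr a x k i j

/-- `r_{ij} = ½(v_{i|j} + v_{j|i})`. -/
def rSym {n : ℕ} (a : (Fin n → ℝ) → Matrix (Fin n) (Fin n) ℝ)
    (v : (Fin n → ℝ) → Fin n → ℝ) (x : Fin n → ℝ) (i j : Fin n) : ℝ :=
  (1 / 2) * (covD a v x i j + covD a v x j i)

/-- `s_{ij} = ½(v_{i|j} − v_{j|i})`. -/
def sSym {n : ℕ} (a : (Fin n → ℝ) → Matrix (Fin n) (Fin n) ℝ)
    (v : (Fin n → ℝ) → Fin n → ℝ) (x : Fin n → ℝ) (i j : Fin n) : ℝ :=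
  (1 / 2) * (covD a v x i j - covD a v x j i)

/-- `r_{00} = r_{ij} y^i y^j`. -/
def r00 {n : ℕ} (a : (Fin n → ℝ) → Matrix (Fin n) (Fin n) ℝ)
    (v : (Fin n → ℝ) → Fin n → ℝ) (x y : Fin n → ℝ) : ℝ :=
  ∑ i, ∑ j, rSym a v x i j * y i * y j

/-- `s_{j0} = s_{jk} y^k`. -/
def s0low {n : ℕ} (a : (Fin n → ℝ) → Matrix (Fin n) (Fin n) ℝ)
    (v : (Fin n → ℝ) → Fin n → ℝ) (x y : Fin n → ℝ) (j : Fin n) : ℝ :=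
  ∑ k, sSym a v x j k * y k

/-- `s^i_0 = a^{ij} s_{j0}`. -/
def sUp0 {n : ℕ} (a : (Fin n → ℝ) → Matrix (Fin n) (Fin n) ℝ)
    (v : (Fin n → ℝ) → Fin n → ℝ) (x y : Fin n → ℝ) (i : Fin n) : ℝ :=
  ∑ j, (a x)⁻¹ i j * s0low a v x y j

/-- Contraction `w_i · (s of v)^i_0`. -/
def contrS {n : ℕ} (a : (Fin n → ℝ) → Matrix (Fin n) (Fin n) ℝ)
    (v w : (Fin n → ℝ) → Fin n → ℝ) (x y : Fin n → ℝ) : ℝ :=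
  ∑ i, w x i * sUp0 a v x y i

/-- Fundamental tensor of `F(x,·)` as a matrix. -/
def gmatF {n : ℕ} (F : (Fin n → ℝ) → (Fin n → ℝ) → ℝ) (x y : Fin n → ℝ) :
    Matrix (Fin n) (Fin n) ℝ :=
  Matrix.of fun i j => fundT (F x) y i j

/-- Spray coefficients `G^i = ¼ g^{il}(∂g_{jl}/∂x^k + ∂g_{lk}/∂x^j − ∂g_{jk}/∂x^l) y^j y^k`. -/
def sprayF {n : ℕ} (F : (Fin n → ℝ) → (Fin n → ℝ) → ℝ) (x y : Fin n → ℝ) (i : Fin n) : ℝ :=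
  (1 / 4) * ∑ l, (gmatF F x y)⁻¹ i l *
    ∑ j, ∑ k, (pd (fun z => gmatF F z y j l) x k
        + pd (fun z => gmatF F z y l k) x j
        - pd (fun z => gmatF F z y j k) x l) * y j * y k

/-!
Two facts about a function `F` that is positively homogeneous of degree one in `y` reduce the
theorem to the chain rule. Euler's theorem for `F²` gives `yⁱ g_ij = F ℓ_j` and
`g_ij yⁱ yʲ = F²`, so contracting the spray coefficients with `ℓ` collapses the Christoffel-type
sum to `2 ℓ_r G^r = y^k ∂F/∂x^k`. Both `F` and `α` satisfy this relation. On the other hand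
`dF = Π dα + Ψ_s dβ + Ψ_s̄ dγ` in the variables `x` and `y` alike; in
`2 ℓ_r G^r - 2 ℓ_r ^αG^r` the terms with `Π` cancel, and what remains of `β` is
`y^k ∂β/∂x^k - 2 b_r ^αG^r = ^βr_00`.

The relation for `F` requires `g_ij` to be invertible. Since `g = F·Hess F + ℓ ⊗ ℓ`, a kernel vector
`v` satisfies `ℓ(v) = 0` and `Hess F(v, ·) = 0`. Pairing the latter with `a^{ij} h_j`, where `h` is
the component of `b` or `γ` orthogonal to `y`, gives a homogeneous `2 × 2` system with determinant
`ΠΓ`; hence `v` is a multiple of `y`, and `ℓ(y) = F ≠ 0` forces `v = 0`.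
-/

section

open Function Matrix Topology

section Homogeneous

variable {V : Type*} [NormedAddCommGroup V] [NormedSpace ℝ V] {k : ℕ} {f : V → ℝ}

/-- Positive homogeneity of degree `k`: `f (t • y) = t ^ k * f y` for `t > 0`. -/
def PosHomogeneous (k : ℕ) (f : V → ℝ) : Prop :=
  ∀ ⦃t : ℝ⦄, 0 < t → ∀ y, f (t • y) = t ^ k * f y

namespace PosHomogeneous

theorem sq (hf : PosHomogeneous k f) : PosHomogeneous (2 * k) fun y => f y ^ 2 := by
  intro t ht y
  simp only [hf ht]
  ring

theorem fderiv_apply_self (hf : PosHomogeneous k f) {y : V} (hd : DifferentiableAt ℝ f y) :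
    fderiv ℝ f y y = k * f y := by
  have hray : HasDerivAt (fun t : ℝ => f (t • y)) (fderiv ℝ f y y) 1 := by
    have hline : HasDerivAt (fun t : ℝ => t • y) y 1 := by
      simpa using (hasDerivAt_id (1 : ℝ)).smul_const y
    refine HasFDerivAt.comp_hasDerivAt 1 ?_ hline
    simpa using hd.hasFDerivAt
  have hpow : HasDerivAt (fun t : ℝ => t ^ k * f y) (k * f y) 1 := by
    simpa using (hasDerivAt_pow k (1 : ℝ)).mul_const (f y)
  refine hray.unique (hpow.congr_of_eventuallyEq ?_)
  filter_upwards [lt_mem_nhds one_pos] with t ht using hf ht y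

theorem fderiv_apply (hf : PosHomogeneous (k + 1) f) (v : V) :
    PosHomogeneous k fun y => fderiv ℝ f y v := by
  intro t ht y
  have hscale : t • fderiv ℝ f (t • y) = t ^ (k + 1) • fderiv ℝ f y := by
    have hcomp : (fun z => f (t • z)) = t ^ (k + 1) • f := funext fun z => hf ht z
    rw [← fderiv_comp_smul, hcomp, fderiv_const_smul_field, Pi.smul_apply]
  have happly := congrArg (· v) hscale
  simp only [_root_.smul_apply, smul_eq_mul, pow_succ'] at happly
  exact mul_left_cancel₀ ht.ne' (by rw [happly, mul_assoc])

end PosHomogeneous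

end Homogeneous

section SlotDerivatives

variable {f : ℝ → ℝ → ℝ} {p q : ℝ}

theorem hasFDerivAt_uncurry (hf : DifferentiableAt ℝ (uncurry f) (p, q)) :
    HasFDerivAt (uncurry f)
      (Ds f p q • ContinuousLinearMap.fst ℝ ℝ ℝ + Dt f p q • ContinuousLinearMap.snd ℝ ℝ ℝ)
      (p, q) := by
  have hs : Ds f p q = fderiv ℝ (uncurry f) (p, q) (1, 0) :=
    (HasFDerivAt.comp_hasDerivAt (f := fun u => (u, q)) p hf.hasFDerivAt
      ((hasDerivAt_id p).prodMk (hasDerivAt_const p q))).deriv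
  have ht : Dt f p q = fderiv ℝ (uncurry f) (p, q) (0, 1) :=
    (HasFDerivAt.comp_hasDerivAt (f := fun u => (p, u)) q hf.hasFDerivAt
      ((hasDerivAt_const q p).prodMk (hasDerivAt_id q))).deriv
  refine hf.hasFDerivAt.congr_fderiv ?_
  ext <;> simp [hs, ht]

theorem contDiffAt_Ds {m n : WithTop ℕ∞} (hf : ContDiffAt ℝ n (uncurry f) (p, q))
    (hmn : m + 1 ≤ n) : ContDiffAt ℝ m (uncurry (Ds f)) (p, q) := by
  have hcomp : ContDiffAt ℝ n (uncurry fun (r : ℝ × ℝ) u => f u r.2) ((p, q), p) :=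
    ContDiffAt.comp (g := uncurry f) (f := fun z : (ℝ × ℝ) × ℝ => (z.2, z.1.2)) _ hf (by fun_prop)
  exact (hcomp.fderiv (g := Prod.fst) contDiffAt_fst hmn).clm_apply contDiffAt_const

theorem contDiffAt_Dt {m n : WithTop ℕ∞} (hf : ContDiffAt ℝ n (uncurry f) (p, q))
    (hmn : m + 1 ≤ n) : ContDiffAt ℝ m (uncurry (Dt f)) (p, q) := by
  have hcomp : ContDiffAt ℝ n (uncurry fun (r : ℝ × ℝ) u => f r.1 u) ((p, q), q) :=
    ContDiffAt.comp (g := uncurry f) (f := fun z : (ℝ × ℝ) × ℝ => (z.1.1, z.2)) _ hf (by fun_prop)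
  exact (hcomp.fderiv (g := Prod.snd) contDiffAt_snd hmn).clm_apply contDiffAt_const

theorem Ds_Dt_comm (hf : ContDiffAt ℝ 2 (uncurry f) (p, q)) : Ds (Dt f) p q = Dt (Ds f) p q := by
  have hdiff : ∀ᶠ r in 𝓝 (p, q), DifferentiableAt ℝ (uncurry f) r :=
    (hf.eventually (by simp)).mono fun r hr => hr.differentiableAt (by simp)
  have hDs : uncurry (Ds f) =ᶠ[𝓝 (p, q)] fun r => fderiv ℝ (uncurry f) r (1, 0) := by
    filter_upwards [hdiff] with r hr
    simp [(hasFDerivAt_uncurry hr).fderiv, uncurry]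
  have hDt : uncurry (Dt f) =ᶠ[𝓝 (p, q)] fun r => fderiv ℝ (uncurry f) r (0, 1) := by
    filter_upwards [hdiff] with r hr
    simp [(hasFDerivAt_uncurry hr).fderiv, uncurry]
  have hd : DifferentiableAt ℝ (fderiv ℝ (uncurry f)) (p, q) :=
    (hf.fderiv_right (m := 1) (by norm_num)).differentiableAt (by simp)
  have hsnd (v : ℝ × ℝ) : HasFDerivAt (fun r => fderiv ℝ (uncurry f) r v)
      ((fderiv ℝ (fderiv ℝ (uncurry f)) (p, q)).flip v) (p, q) := by
    simpa using hd.hasFDerivAt.clm_apply (hasFDerivAt_const v (p, q))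
  have hDsDt := (hasFDerivAt_uncurry
    ((contDiffAt_Dt hf (m := 1) (by norm_num)).differentiableAt (by simp))).unique
    ((hsnd (0, 1)).congr_of_eventuallyEq hDt)
  have hDtDs := (hasFDerivAt_uncurry
    ((contDiffAt_Ds hf (m := 1) (by norm_num)).differentiableAt (by simp))).unique
    ((hsnd (1, 0)).congr_of_eventuallyEq hDs)
  have hsymm := (hf.isSymmSndFDerivAt (by simp)).eq (1, 0) (0, 1)
  simpa [hsymm] using (congrArg (· (1, 0)) hDsDt).trans
    (hsymm.trans (congrArg (· (0, 1)) hDtDs).symm)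

variable {E : Type*} [NormedAddCommGroup E] [NormedSpace ℝ E] {x : E}

theorem hasFDerivAt_comp₂ {s t : E → ℝ} {s' t' : E →L[ℝ] ℝ}
    (hf : DifferentiableAt ℝ (uncurry f) (s x, t x)) (hs : HasFDerivAt s s' x)
    (ht : HasFDerivAt t t' x) :
    HasFDerivAt (fun z => f (s z) (t z)) (Ds f (s x) (t x) • s' + Dt f (s x) (t x) • t') x := by
  refine ((hasFDerivAt_uncurry hf).comp x (hs.prodMk ht)).congr_fderiv ?_
  ext
  simp

theorem hasFDerivAt_div {η α : E → ℝ} {η' α' : E →L[ℝ] ℝ} (hη : HasFDerivAt η η' x)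
    (hα : HasFDerivAt α α' x) (h0 : α x ≠ 0) :
    HasFDerivAt (fun z => η z / α z) ((α x)⁻¹ • (η' - (η x / α x) • α')) x := by
  simp only [div_eq_mul_inv]
  refine (hη.fun_mul ((hasDerivAt_inv h0).comp_hasFDerivAt x hα)).congr_fderiv ?_
  ext w
  simp only [neg_smul, smul_neg, Function.comp_apply, _root_.add_apply, _root_.neg_apply,
    _root_.smul_apply, smul_eq_mul, _root_.sub_apply]
  field_simp
  ring

theorem hasFDerivAt_mul_comp_div {α β γ : E → ℝ} {α' β' γ' : E →L[ℝ] ℝ}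
    (hf : DifferentiableAt ℝ (uncurry f) (β x / α x, γ x / α x)) (hα : HasFDerivAt α α' x)
    (hβ : HasFDerivAt β β' x) (hγ : HasFDerivAt γ γ' x) (h0 : α x ≠ 0) :
    HasFDerivAt (fun z => α z * f (β z / α z) (γ z / α z))
      (PiF f (β x / α x) (γ x / α x) • α' + Ds f (β x / α x) (γ x / α x) • β' +
        Dt f (β x / α x) (γ x / α x) • γ') x := by
  have hcomp := hasFDerivAt_comp₂ (s := fun z => β z / α z) (t := fun z => γ z / α z) hf
    (hasFDerivAt_div hβ hα h0) (hasFDerivAt_div hγ hα h0)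
  refine (hα.fun_mul hcomp).congr_fderiv ?_
  ext w
  simp only [smul_add, _root_.add_apply, _root_.smul_apply, _root_.sub_apply, smul_eq_mul, PiF]
  field_simp
  ring

/-- The derivatives of the coefficients cancel in the terms without `m'`, as
`dΠ = -s dΨ_s - s̄ dΨ_s̄`. -/
theorem hasFDerivAt_PiF_mul_add {s t m : E → ℝ} {s' t' m' : E →L[ℝ] ℝ} (c d : ℝ)
    (hf : ContDiffAt ℝ 2 (uncurry f) (s x, t x)) (hs : HasFDerivAt s s' x)
    (ht : HasFDerivAt t t' x) (hm : HasFDerivAt m m' x) :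
    HasFDerivAt
      (fun z => PiF f (s z) (t z) * m z + Ds f (s z) (t z) * c + Dt f (s z) (t z) * d)
      (PiF f (s x) (t x) • m'
        + (c - s x * m x) • (Ds (Ds f) (s x) (t x) • s' + Dt (Ds f) (s x) (t x) • t')
        + (d - t x * m x) • (Dt (Ds f) (s x) (t x) • s' + Dt (Dt f) (s x) (t x) • t')) x := by
  have hf' := hasFDerivAt_comp₂ (hf.differentiableAt (by simp)) hs ht
  have hDs := hasFDerivAt_comp₂ ((contDiffAt_Ds hf (m := 1) (by norm_num)).differentiableAt
    (by simp)) hs ht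
  have hDt := hasFDerivAt_comp₂ ((contDiffAt_Dt hf (m := 1) (by norm_num)).differentiableAt
    (by simp)) hs ht
  rw [Ds_Dt_comm hf] at hDt
  have hPi := (hf'.fun_sub (hs.fun_mul hDs)).fun_sub (ht.fun_mul hDt)
  refine (((hPi.fun_mul hm).fun_add (hDs.mul_const c)).fun_add (hDt.mul_const d)).congr_fderiv ?_
  ext w
  simp only [smul_add, _root_.add_apply, _root_.smul_apply, smul_eq_mul, _root_.sub_apply, PiF]
  ring

end SlotDerivatives

section Slices

variable {E F G : Type*} [NormedAddCommGroup E] [NormedSpace ℝ E] [NormedAddCommGroup F]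
  [NormedSpace ℝ F] [NormedAddCommGroup G] [NormedSpace ℝ G]

theorem contDiffAt_left_of_uncurry {f : E → F → G} {x : E} {y : F} {k : WithTop ℕ∞}
    (hf : ContDiffAt ℝ k (uncurry f) (x, y)) : ContDiffAt ℝ k (fun z => f z y) x :=
  ContDiffAt.comp (f := fun z => (z, y)) x hf (by fun_prop)

theorem contDiffAt_right_of_uncurry {f : E → F → G} {x : E} {y : F} {k : WithTop ℕ∞}
    (hf : ContDiffAt ℝ k (uncurry f) (x, y)) : ContDiffAt ℝ k (f x) y :=
  ContDiffAt.comp (f := fun w => (x, w)) y hf (by fun_prop)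

end Slices

section Coordinates

variable {n : ℕ}

/-- The linear form `w ↦ v ⬝ᵥ w` on `ℝⁿ` as a continuous linear map; it expresses derivatives
through their coordinate vectors. -/
def dotCLM (v : Fin n → ℝ) : (Fin n → ℝ) →L[ℝ] ℝ :=
  (dotProductBilin ℝ ℝ v).toContinuousLinearMap

@[simp]
theorem dotCLM_apply (v w : Fin n → ℝ) : dotCLM v w = v ⬝ᵥ w := rfl

theorem fderiv_apply_eq_pd_dotProduct (f : (Fin n → ℝ) → ℝ) (y v : Fin n → ℝ) :
    fderiv ℝ f y v = pd f y ⬝ᵥ v := by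
  conv_lhs => rw [pi_eq_sum_univ' v]
  simp [pd, dotProduct, mul_comm]

theorem fderiv_dotProduct_const {v : (Fin n → ℝ) → Fin n → ℝ} {x : Fin n → ℝ}
    (hv : ∀ i, DifferentiableAt ℝ (fun z => v z i) x) (y w : Fin n → ℝ) :
    fderiv ℝ (fun z => v z ⬝ᵥ y) x w = ∑ i, ∑ j, pd (fun z => v z i) x j * y i * w j := by
  have h : HasFDerivAt (fun z => v z ⬝ᵥ y) (∑ i, y i • fderiv ℝ (fun z => v z i) x) x :=
    HasFDerivAt.fun_sum fun i _ => (hv i).hasFDerivAt.mul_const (y i)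
  rw [h.fderiv]
  simp only [_root_.sum_apply, _root_.smul_apply, smul_eq_mul,
    fderiv_apply_eq_pd_dotProduct, dotProduct, Finset.mul_sum]
  exact Finset.sum_congr rfl fun i _ => Finset.sum_congr rfl fun j _ => by ring

theorem fderiv_dotProduct_mulVec_const {g : (Fin n → ℝ) → Matrix (Fin n) (Fin n) ℝ}
    {x : Fin n → ℝ} (hg : ∀ i j, DifferentiableAt ℝ (fun z => g z i j) x) (y w : Fin n → ℝ) :
    fderiv ℝ (fun z => y ⬝ᵥ g z *ᵥ y) x w
      = ∑ i, ∑ j, ∑ k, pd (fun z => g z i j) x k * y i * y j * w k := by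
  have hrow (i : Fin n) : HasFDerivAt (fun z => (g z *ᵥ y) i)
      (∑ j, y j • fderiv ℝ (fun z => g z i j) x) x := by
    simp only [mulVec, dotProduct]
    exact HasFDerivAt.fun_sum fun j _ => (hg i j).hasFDerivAt.mul_const (y j)
  have h : HasFDerivAt (fun z => y ⬝ᵥ g z *ᵥ y)
      (∑ i, y i • ∑ j, y j • fderiv ℝ (fun z => g z i j) x) x :=
    HasFDerivAt.fun_sum fun i _ => (hrow i).const_mul (y i)
  rw [h.fderiv]
  simp only [_root_.sum_apply, _root_.smul_apply, smul_eq_mul,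
    fderiv_apply_eq_pd_dotProduct, dotProduct, Finset.mul_sum]
  exact Finset.sum_congr rfl fun i _ => Finset.sum_congr rfl fun j _ =>
    Finset.sum_congr rfl fun k _ => by ring

theorem mulVec_dotProduct_comm {ι R : Type*} [Fintype ι] [CommSemiring R] {A : Matrix ι ι R}
    (hA : A.IsSymm) (u v : ι → R) : A *ᵥ u ⬝ᵥ v = A *ᵥ v ⬝ᵥ u := by
  rw [dotProduct_comm, dotProduct_mulVec, ← mulVec_transpose, hA.eq]

theorem hasFDerivAt_dotProduct_mulVec_self {A : Matrix (Fin n) (Fin n) ℝ} (hA : A.IsSymm)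
    (y : Fin n → ℝ) :
    HasFDerivAt (fun z => z ⬝ᵥ A *ᵥ z) ((2 : ℝ) • dotCLM (A *ᵥ y)) y := by
  have h : HasFDerivAt (fun z => z ⬝ᵥ A *ᵥ z)
      (∑ i, (y i • dotCLM (A i) + (A *ᵥ y) i • ContinuousLinearMap.proj i)) y :=
    HasFDerivAt.fun_sum fun i _ => (hasFDerivAt_apply i y).mul (dotCLM (A i)).hasFDerivAt
  refine h.congr_fderiv (ContinuousLinearMap.ext fun w => ?_)
  calc _ = y ⬝ᵥ A *ᵥ w + A *ᵥ y ⬝ᵥ w := by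
        simp [Finset.sum_add_distrib, dotProduct, mulVec]
    _ = _ := by rw [dotProduct_comm, mulVec_dotProduct_comm hA, ← two_mul]; rfl

theorem contDiffAt_pd_snd {F : (Fin n → ℝ) → (Fin n → ℝ) → ℝ} {x y : Fin n → ℝ}
    {m k : WithTop ℕ∞} (hF : ContDiffAt ℝ k (uncurry F) (x, y)) (hmk : m + 1 ≤ k) (i : Fin n) :
    ContDiffAt ℝ m (uncurry fun z w => pd (F z) w i) (x, y) := by
  have hcomp : ContDiffAt ℝ k
      (uncurry fun (r : (Fin n → ℝ) × (Fin n → ℝ)) u => F r.1 u) ((x, y), y) :=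
    ContDiffAt.comp (g := uncurry F) (f := fun z : (_ × (Fin n → ℝ)) × (Fin n → ℝ) => (z.1.1, z.2))
      _ hF (by fun_prop)
  exact (hcomp.fderiv (g := Prod.snd) contDiffAt_snd hmk).clm_apply contDiffAt_const

end Coordinates

section Spray

variable {n : ℕ} {F : (Fin n → ℝ) → (Fin n → ℝ) → ℝ} {x y : Fin n → ℝ}

theorem pd_sq {f : (Fin n → ℝ) → ℝ} (hf : DifferentiableAt ℝ f y) :
    pd (fun z => f z ^ 2) y = (2 * f y) • pd f y := by
  funext i
  simp [pd, fderiv_fun_pow 2 hf]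

theorem differentiableAt_fderiv_apply {f : (Fin n → ℝ) → ℝ} (hf : ContDiffAt ℝ 2 f y)
    (v : Fin n → ℝ) : DifferentiableAt ℝ (fun z => fderiv ℝ f z v) y :=
  ((hf.fderiv_right (m := 1) (by norm_num)).clm_apply contDiffAt_const).differentiableAt (by simp)

theorem differentiableAt_pd {f : (Fin n → ℝ) → ℝ} (hf : ContDiffAt ℝ 2 f y) (i : Fin n) :
    DifferentiableAt ℝ (fun z => pd f z i) y :=
  differentiableAt_fderiv_apply hf _

theorem vecMul_gmatF (hF : ContDiffAt ℝ 2 (F x) y) (hhom : PosHomogeneous 1 (F x)) :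
    y ᵥ* gmatF F x y = F x y • pd (F x) y := by
  funext j
  have heuler : fderiv ℝ (fun z => pd (fun w => F x w ^ 2) z j) y y
      = pd (fun w => F x w ^ 2) y j := by
    simpa [pd] using (hhom.sq.fderiv_apply (Pi.single j 1)).fderiv_apply_self
      (differentiableAt_pd (hF.pow 2) j)
  have hsum : (y ᵥ* gmatF F x y) j
      = 1 / 2 * fderiv ℝ (fun z => pd (fun w => F x w ^ 2) z j) y y := by
    rw [fderiv_apply_eq_pd_dotProduct, vecMul, dotProduct, dotProduct, Finset.mul_sum]
    exact Finset.sum_congr rfl fun i _ => by simp only [gmatF, fundT, pd2, of_apply]; ring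
  rw [hsum, heuler, pd_sq (hF.differentiableAt (by simp)), Pi.smul_apply,
    Pi.smul_apply, smul_eq_mul, smul_eq_mul]
  ring

theorem dotProduct_gmatF_mulVec_self (hF : ContDiffAt ℝ 2 (F x) y)
    (hhom : PosHomogeneous 1 (F x)) : y ⬝ᵥ gmatF F x y *ᵥ y = F x y ^ 2 := by
  rw [dotProduct_mulVec, vecMul_gmatF hF hhom, smul_dotProduct, ← fderiv_apply_eq_pd_dotProduct,
    hhom.fderiv_apply_self (hF.differentiableAt (by simp))]
  simp [sq]

theorem gmatF_mulVec (hF : ContDiffAt ℝ 2 (F x) y) (v : Fin n → ℝ) :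
    gmatF F x y *ᵥ v
      = F x y • pd (fun w => fderiv ℝ (F x) w v) y + fderiv ℝ (F x) y v • pd (F x) y := by
  have hdiff : ∀ᶠ w in 𝓝 y, DifferentiableAt ℝ (F x) w :=
    (hF.eventually (by simp)).mono fun w hw => hw.differentiableAt (by simp)
  have hsq : (fun w => ∑ j, pd (fun u => F x u ^ 2) w j * v j)
      =ᶠ[𝓝 y] fun w => 2 * (F x w * fderiv ℝ (F x) w v) := by
    filter_upwards [hdiff] with w hw
    rw [fderiv_apply_eq_pd_dotProduct, pd_sq hw, ← dotProduct, smul_dotProduct, smul_eq_mul,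
      mul_assoc]
  have hprod := (hdiff.self_of_nhds.hasFDerivAt.fun_mul
    (differentiableAt_fderiv_apply hF v).hasFDerivAt).const_mul 2
  have hsum : HasFDerivAt (fun w => ∑ j, pd (fun u => F x u ^ 2) w j * v j) _ y :=
    HasFDerivAt.fun_sum fun j _ =>
      (differentiableAt_pd (hF.pow 2) j).hasFDerivAt.mul_const (v j)
  have heq := hsum.unique (hprod.congr_of_eventuallyEq hsq)
  funext i
  have hi := congrArg (· (Pi.single i 1)) heq
  simp only [_root_.sum_apply, _root_.smul_apply, _root_.add_apply, smul_eq_mul] at hi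
  calc (gmatF F x y *ᵥ v) i
      = 1 / 2 * ∑ j, v j * fderiv ℝ (fun w => pd (fun u => F x u ^ 2) w j) y (Pi.single i 1) := by
        rw [mulVec, dotProduct, Finset.mul_sum]
        exact Finset.sum_congr rfl fun j _ => by simp only [gmatF, fundT, pd2, pd, of_apply]; ring
    _ = _ := by rw [hi]; simp only [pd, Pi.add_apply, Pi.smul_apply, smul_eq_mul]; ring

theorem isUnit_det_gmatF (hF : ContDiffAt ℝ 2 (F x) y) (hhom : PosHomogeneous 1 (F x))
    (hne : F x y ≠ 0)
    (hker : ∀ v, fderiv ℝ (F x) y v = 0 → fderiv ℝ (fun w => fderiv ℝ (F x) w v) y = 0 → v = 0) :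
    IsUnit (gmatF F x y).det := by
  rw [isUnit_iff_ne_zero]
  intro hdet
  obtain ⟨v, hv0, hv⟩ := exists_mulVec_eq_zero_iff.mpr hdet
  have htangent : fderiv ℝ (F x) y v = 0 := by
    have h : F x y * fderiv ℝ (F x) y v = 0 := by
      rw [fderiv_apply_eq_pd_dotProduct, ← smul_eq_mul, ← smul_dotProduct, ← vecMul_gmatF hF hhom,
        ← dotProduct_mulVec, hv, dotProduct_zero]
    exact (mul_eq_zero.mp h).resolve_left hne
  have hhess : pd (fun w => fderiv ℝ (F x) w v) y = 0 := by
    rw [gmatF_mulVec hF, htangent, zero_smul, add_zero] at hv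
    exact (smul_eq_zero.mp hv).resolve_left hne
  refine hv0 (hker v htangent (ContinuousLinearMap.ext fun w => ?_))
  rw [fderiv_apply_eq_pd_dotProduct, hhess, zero_dotProduct, _root_.zero_apply]

theorem vecMul_gmatF_dotProduct_sprayF (hdet : IsUnit (gmatF F x y).det) :
    (y ᵥ* gmatF F x y) ⬝ᵥ sprayF F x y
      = 1 / 4 * ∑ i, ∑ j, ∑ k, pd (fun z => gmatF F z y i j) x k * y i * y j * y k := by
  set c : Fin n → ℝ := fun l => ∑ j, ∑ k, (pd (fun z => gmatF F z y j l) x k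
    + pd (fun z => gmatF F z y l k) x j - pd (fun z => gmatF F z y j k) x l) * y j * y k with hc
  have hspray : sprayF F x y = (1 / 4 : ℝ) • ((gmatF F x y)⁻¹ *ᵥ c) := rfl
  have hswap : ∑ l, ∑ j, ∑ k, pd (fun z => gmatF F z y j l) x k * y j * y k * y l
      = ∑ i, ∑ j, ∑ k, pd (fun z => gmatF F z y i j) x k * y i * y j * y k := by
    rw [Finset.sum_comm]
    exact Finset.sum_congr rfl fun i _ => Finset.sum_congr rfl fun j _ =>
      Finset.sum_congr rfl fun k _ => by ring
  have hcancel : ∑ l, ∑ j, ∑ k, pd (fun z => gmatF F z y l k) x j * y j * y k * y l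
      = ∑ l, ∑ j, ∑ k, pd (fun z => gmatF F z y j k) x l * y j * y k * y l := by
    rw [Finset.sum_comm]
    exact Finset.sum_congr rfl fun j _ => Finset.sum_congr rfl fun l _ =>
      Finset.sum_congr rfl fun k _ => by ring
  have hsum : y ⬝ᵥ c = (∑ l, ∑ j, ∑ k, pd (fun z => gmatF F z y j l) x k * y j * y k * y l)
      + (∑ l, ∑ j, ∑ k, pd (fun z => gmatF F z y l k) x j * y j * y k * y l)
      - ∑ l, ∑ j, ∑ k, pd (fun z => gmatF F z y j k) x l * y j * y k * y l := by
    simp only [hc, dotProduct, Finset.mul_sum, ← Finset.sum_add_distrib, ← Finset.sum_sub_distrib]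
    exact Finset.sum_congr rfl fun l _ => Finset.sum_congr rfl fun j _ =>
      Finset.sum_congr rfl fun k _ => by ring
  rw [hspray, dotProduct_smul, smul_eq_mul, dotProduct_mulVec, vecMul_vecMul,
    mul_nonsing_inv _ hdet, vecMul_one, hsum, hswap, hcancel, add_sub_cancel_right]

theorem differentiableAt_gmatF (hF : ContDiffAt ℝ 3 (uncurry F) (x, y)) (i j : Fin n) :
    DifferentiableAt ℝ (fun z => gmatF F z y i j) x := by
  have h1 := contDiffAt_pd_snd (m := 2) (F := fun z w => F z w ^ 2) (hF.pow 2) (by norm_num) j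
  have h2 := contDiffAt_pd_snd (m := 1) h1 (by norm_num) i
  exact ((contDiffAt_left_of_uncurry h2).differentiableAt (by simp)).const_mul (1 / 2)

/-- The contraction of Euler's identity `F² = g_{ij}yⁱyʲ`, differentiated in `x` along `y`. -/
theorem two_mul_pd_dotProduct_sprayF (hF : ContDiffAt ℝ 3 (uncurry F) (x, y))
    (hhom : ∀ z, PosHomogeneous 1 (F z)) (hne : F x y ≠ 0) (hdet : IsUnit (gmatF F x y).det) :
    2 * (pd (F x) y ⬝ᵥ sprayF F x y) = fderiv ℝ (fun z => F z y) x y := by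
  have hfst : Continuous fun z : Fin n → ℝ => (z, y) := by fun_prop
  have hsmooth : ∀ᶠ z in 𝓝 x, ContDiffAt ℝ 3 (uncurry F) (z, y) :=
    hfst.continuousAt.eventually (hF.eventually (by simp))
  have hslice {z : Fin n → ℝ} (hz : ContDiffAt ℝ 3 (uncurry F) (z, y)) : ContDiffAt ℝ 2 (F z) y :=
    (contDiffAt_right_of_uncurry hz).of_le (by norm_num)
  have hd : DifferentiableAt ℝ (fun z => F z y) x :=
    (contDiffAt_left_of_uncurry hF).differentiableAt (by simp)
  have hsq : (fun z => F z y ^ 2) =ᶠ[𝓝 x] fun z => y ⬝ᵥ gmatF F z y *ᵥ y :=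
    hsmooth.mono fun z hz => (dotProduct_gmatF_mulVec_self (hslice hz) (hhom z)).symm
  have hderiv : 2 * F x y * fderiv ℝ (fun z => F z y) x y
      = 4 * ((F x y • pd (F x) y) ⬝ᵥ sprayF F x y) := by
    rw [← vecMul_gmatF (hslice hF) (hhom x), vecMul_gmatF_dotProduct_sprayF hdet,
      ← fderiv_dotProduct_mulVec_const (differentiableAt_gmatF hF), ← hsq.fderiv_eq,
      fderiv_fun_pow 2 hd]
    simp
  rw [smul_dotProduct, smul_eq_mul] at hderiv
  exact mul_left_cancel₀ hne (by linarith)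

end Spray

section Riemannian

variable {n : ℕ} {A : Matrix (Fin n) (Fin n) ℝ} {v y : Fin n → ℝ}

theorem quadInv_eq_dotProduct (A : Matrix (Fin n) (Fin n) ℝ) (u v : Fin n → ℝ) :
    quadInv A u v = u ⬝ᵥ A⁻¹ *ᵥ v := by
  simp only [quadInv, dotProduct, mulVec, Finset.mul_sum]
  exact Finset.sum_congr rfl fun i _ => Finset.sum_congr rfl fun j _ => by ring

theorem alph_eq_sqrt (A : Matrix (Fin n) (Fin n) ℝ) (y : Fin n → ℝ) :
    alph A y = √(y ⬝ᵥ A *ᵥ y) := by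
  simp only [alph, dotProduct, mulVec, Finset.mul_sum]
  congr 1
  exact Finset.sum_congr rfl fun i _ => Finset.sum_congr rfl fun j _ => by ring

theorem dotProduct_mulVec_self_pos (hA : A.PosDef) (hy : y ≠ 0) : 0 < y ⬝ᵥ A *ᵥ y := by
  simpa using hA.dotProduct_mulVec_pos hy

theorem alph_sq (hA : A.PosSemidef) (y : Fin n → ℝ) : alph A y ^ 2 = y ⬝ᵥ A *ᵥ y := by
  rw [alph_eq_sqrt, Real.sq_sqrt (by simpa using hA.dotProduct_mulVec_nonneg y)]

theorem alph_pos (hA : A.PosDef) (hy : y ≠ 0) : 0 < alph A y := by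
  rw [alph_eq_sqrt]
  exact Real.sqrt_pos.mpr (dotProduct_mulVec_self_pos hA hy)

theorem posHomogeneous_alph (A : Matrix (Fin n) (Fin n) ℝ) : PosHomogeneous 1 (alph A) := by
  intro t ht y
  rw [alph_eq_sqrt, alph_eq_sqrt, mulVec_smul, smul_dotProduct, dotProduct_smul, smul_eq_mul,
    smul_eq_mul, ← mul_assoc, ← sq, Real.sqrt_mul (sq_nonneg t), Real.sqrt_sq ht.le, pow_one]

theorem posHomogeneous_sVar (A : Matrix (Fin n) (Fin n) ℝ) (v : Fin n → ℝ) :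
    PosHomogeneous 0 (sVar A v) := by
  intro t ht y
  have hv : oneForm v (t • y) = t * oneForm v y := dotProduct_smul t v y
  rw [sVar, hv, posHomogeneous_alph A ht, pow_one, mul_div_mul_left _ _ ht.ne', pow_zero, one_mul,
    sVar]

theorem hasFDerivAt_alph (hA : A.PosDef) (hy : y ≠ 0) :
    HasFDerivAt (alph A) ((alph A y)⁻¹ • dotCLM (A *ᵥ y)) y := by
  have hquad := hasFDerivAt_dotProduct_mulVec_self (isHermitian_iff_isSymm.mp hA.isHermitian) y
  have hsqrt := hquad.sqrt (dotProduct_mulVec_self_pos hA hy).ne'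
  simp only [← alph_eq_sqrt] at hsqrt
  refine hsqrt.congr_fderiv ?_
  rw [smul_smul]
  congr 1
  field_simp

theorem pd_alph (hA : A.PosDef) (hy : y ≠ 0) : pd (alph A) y = (alph A y)⁻¹ • (A *ᵥ y) := by
  funext i
  simp [pd, (hasFDerivAt_alph hA hy).fderiv]

theorem hl_eq (hA : A.PosDef) (hy : y ≠ 0) (v : Fin n → ℝ) :
    hl A v y = v - (sVar A v y / alph A y) • (A *ᵥ y) := by
  funext i
  simp [hl, pd_alph hA hy, div_eq_mul_inv, mul_assoc]

theorem hasFDerivAt_sVar (hA : A.PosDef) (hy : y ≠ 0) (v : Fin n → ℝ) :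
    HasFDerivAt (sVar A v) ((alph A y)⁻¹ • dotCLM (hl A v y)) y := by
  refine (hasFDerivAt_div (dotCLM v).hasFDerivAt (hasFDerivAt_alph hA hy)
    (alph_pos hA hy).ne').congr_fderiv ?_
  have hs : sVar A v y = v ⬝ᵥ y / alph A y := rfl
  ext w
  simp [hl_eq hA hy, hs, div_eq_mul_inv, mul_assoc]

theorem hl_dotProduct (hA : A.PosDef) (hy : y ≠ 0) (u v : Fin n → ℝ) :
    hl A u y ⬝ᵥ v = u ⬝ᵥ v - sVar A u y * sVar A (A *ᵥ v) y := by
  have hs : sVar A (A *ᵥ v) y = A *ᵥ v ⬝ᵥ y / alph A y := rfl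
  rw [hl_eq hA hy, sub_dotProduct, smul_dotProduct,
    mulVec_dotProduct_comm (isHermitian_iff_isSymm.mp hA.isHermitian), hs, smul_eq_mul]
  ring

theorem quadInv_comm (hA : A.IsSymm) (u v : Fin n → ℝ) : quadInv A u v = quadInv A v u := by
  have hinv : A⁻¹.IsSymm := by rw [IsSymm, transpose_nonsing_inv, hA.eq]
  rw [quadInv_eq_dotProduct, quadInv_eq_dotProduct, dotProduct_comm,
    mulVec_dotProduct_comm hinv,
    dotProduct_comm]

theorem quadInv_mulVec_left (hA : A.PosDef) (u v : Fin n → ℝ) :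
    quadInv A (A *ᵥ u) v = u ⬝ᵥ v := by
  rw [quadInv_comm (isHermitian_iff_isSymm.mp hA.isHermitian), quadInv_eq_dotProduct,
    mulVec_mulVec, nonsing_inv_mul _ hA.det_pos.ne'.isUnit, one_mulVec, dotProduct_comm]

theorem hl_dotProduct_inv_mulVec_hl (hA : A.PosDef) (hy : y ≠ 0) (u v : Fin n → ℝ) :
    hl A u y ⬝ᵥ A⁻¹ *ᵥ hl A v y = quadInv A u v - sVar A u y * sVar A v y := by
  have hα := (alph_pos hA hy).ne'
  have hdet : IsUnit A.det := hA.det_pos.ne'.isUnit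
  have hAu : A *ᵥ y ⬝ᵥ A⁻¹ *ᵥ v = alph A y * sVar A v y := by
    rw [← quadInv_eq_dotProduct, quadInv_mulVec_left hA, sVar, mul_div_cancel₀ _ hα,
      dotProduct_comm]
    rfl
  have hu : u ⬝ᵥ y = alph A y * sVar A u y := (mul_div_cancel₀ _ hα).symm
  have hAy : A *ᵥ y ⬝ᵥ y = alph A y ^ 2 := by rw [alph_sq hA.posSemidef, dotProduct_comm]
  rw [hl_eq hA hy, hl_eq hA hy, mulVec_sub, mulVec_smul, mulVec_mulVec, nonsing_inv_mul _ hdet,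
    one_mulVec]
  simp only [sub_dotProduct, dotProduct_sub, smul_dotProduct, dotProduct_smul, smul_eq_mul, hAu, hu,
    hAy, quadInv_eq_dotProduct]
  field_simp
  ring

/-- Cauchy–Schwarz, since `b² - s²` is the squared length of `h`. -/
theorem sVar_mem_Ioo {b : ℝ} (hA : A.PosDef) (hy : y ≠ 0) (hb : √(quadInv A v v) < b) :
    sVar A v y ∈ Ioo (-b) b := by
  have hnonneg : 0 ≤ hl A v y ⬝ᵥ A⁻¹ *ᵥ hl A v y := by
    simpa using hA.inv.posSemidef.dotProduct_mulVec_nonneg (hl A v y)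
  rw [hl_dotProduct_inv_mulVec_hl hA hy] at hnonneg
  exact abs_lt.mp ((Real.abs_le_sqrt (by linarith)).trans_lt hb)

theorem fundT_alph (hA : A.PosSemidef) (y : Fin n → ℝ) (i j : Fin n) :
    fundT (alph A) y i j = A i j := by
  have hsymm := isHermitian_iff_isSymm.mp hA.isHermitian
  have hpd : (fun z => pd (fun w => alph A w ^ 2) z j) = dotCLM ((2 : ℝ) • A j) := by
    funext z
    simp only [pd, alph_sq hA, (hasFDerivAt_dotProduct_mulVec_self hsymm z).fderiv]
    simp [mulVec]
  rw [fundT, pd2, hpd, pd, ContinuousLinearMap.fderiv]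
  simp [hsymm.apply]

end Riemannian

section RiemannianSpray

variable {n : ℕ} {a : (Fin n → ℝ) → Matrix (Fin n) (Fin n) ℝ} {x y : Fin n → ℝ}

theorem contDiffAt_alph {k : WithTop ℕ∞} (ha : ∀ i j, ContDiffAt ℝ k (fun z => a z i j) x)
    (hA : (a x).PosDef) (hy : y ≠ 0) :
    ContDiffAt ℝ k (uncurry fun z w => alph (a z) w) (x, y) := by
  have ha' (i j : Fin n) : ContDiffAt ℝ k (fun r : (Fin n → ℝ) × (Fin n → ℝ) => a r.1 i j) (x, y) :=
    ContDiffAt.comp (x, y) (ha i j) contDiffAt_fst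
  have hquad : ContDiffAt ℝ k
      (fun r : (Fin n → ℝ) × (Fin n → ℝ) => r.2 ⬝ᵥ a r.1 *ᵥ r.2) (x, y) := by
    simp only [dotProduct, mulVec]
    exact ContDiffAt.sum fun i _ => (by fun_prop : ContDiffAt ℝ k (fun r => r.2 i) (x, y)).mul
      (ContDiffAt.sum fun j _ => (ha' i j).mul (by fun_prop))
  simp only [alph_eq_sqrt]
  exact hquad.sqrt (dotProduct_mulVec_self_pos hA hy).ne'

theorem contDiffAt_sVar {k : WithTop ℕ∞} {v : (Fin n → ℝ) → Fin n → ℝ}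
    (ha : ∀ i j, ContDiffAt ℝ k (fun z => a z i j) x) (hv : ∀ i, ContDiffAt ℝ k (fun z => v z i) x)
    (hA : (a x).PosDef) (hy : y ≠ 0) :
    ContDiffAt ℝ k (uncurry fun z w => sVar (a z) (v z) w) (x, y) := by
  have hv' (i : Fin n) : ContDiffAt ℝ k (fun r : (Fin n → ℝ) × (Fin n → ℝ) => v r.1 i) (x, y) :=
    ContDiffAt.comp (x, y) (hv i) contDiffAt_fst
  have hform : ContDiffAt ℝ k
      (fun r : (Fin n → ℝ) × (Fin n → ℝ) => oneForm (v r.1) r.2) (x, y) := by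
    exact ContDiffAt.sum fun i _ => (hv' i).mul (by fun_prop)
  exact hform.div (contDiffAt_alph ha hA hy) (alph_pos hA hy).ne'

theorem alphaG_eq_sprayF_alph (hA : ∀ᶠ z in 𝓝 x, (a z).PosDef) (y : Fin n → ℝ) :
    alphaG a x y = sprayF (fun z => alph (a z)) x y := by
  have hg : gmatF (fun z => alph (a z)) x y = a x :=
    Matrix.ext fun i j => fundT_alph hA.self_of_nhds.posSemidef y i j
  have hpd (i j : Fin n) :
      pd (fun z => gmatF (fun z => alph (a z)) z y i j) x = pd (fun z => a z i j) x := by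
    have heq : (fun z => gmatF (fun z => alph (a z)) z y i j) =ᶠ[𝓝 x] fun z => a z i j :=
      hA.mono fun z hz => fundT_alph hz.posSemidef y i j
    funext k
    simp only [pd, heq.fderiv_eq]
  have hsymm (i j : Fin n) : pd (fun z => a z i j) x = pd (fun z => a z j i) x := by
    have heq : (fun z => a z i j) =ᶠ[𝓝 x] fun z => a z j i :=
      hA.mono fun z hz => (isHermitian_iff_isSymm.mp hz.isHermitian).apply j i
    funext k
    simp only [pd, heq.fderiv_eq]
  funext i
  simp only [sprayF, alphaG, chr, hg, hpd, Finset.mul_sum, Finset.sum_mul]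
  rw [Finset.sum_comm_cycle]
  refine Finset.sum_congr rfl fun l _ => Finset.sum_congr rfl fun j _ =>
    Finset.sum_congr rfl fun k _ => ?_
  rw [hsymm l k]
  ring

theorem two_mul_pd_alph_dotProduct_alphaG (ha : ∀ i j, ContDiffAt ℝ 3 (fun z => a z i j) x)
    (hA : ∀ᶠ z in 𝓝 x, (a z).PosDef) (hy : y ≠ 0) :
    2 * (pd (alph (a x)) y ⬝ᵥ alphaG a x y) = fderiv ℝ (fun z => alph (a z) y) x y := by
  have hAx := hA.self_of_nhds
  have hg : gmatF (fun z => alph (a z)) x y = a x :=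
    Matrix.ext fun i j => fundT_alph hAx.posSemidef y i j
  rw [alphaG_eq_sprayF_alph hA]
  exact two_mul_pd_dotProduct_sprayF (contDiffAt_alph ha hAx hy)
    (fun z => posHomogeneous_alph (a z)) (alph_pos hAx hy).ne' (hg ▸ hAx.det_pos.ne'.isUnit)

theorem r00_eq_fderiv_sub (a : (Fin n → ℝ) → Matrix (Fin n) (Fin n) ℝ)
    {v : (Fin n → ℝ) → Fin n → ℝ} (hv : ∀ i, DifferentiableAt ℝ (fun z => v z i) x)
    (y : Fin n → ℝ) :
    r00 a v x y = fderiv ℝ (fun z => oneForm (v z) y) x y - 2 * (v x ⬝ᵥ alphaG a x y) := by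
  have hcov : r00 a v x y = ∑ i, ∑ j, covD a v x i j * y i * y j := by
    have hswap : ∑ i, ∑ j, covD a v x j i * y i * y j = ∑ i, ∑ j, covD a v x i j * y i * y j := by
      rw [Finset.sum_comm]
      exact Finset.sum_congr rfl fun i _ => Finset.sum_congr rfl fun j _ => by ring
    have hhalf : r00 a v x y = 1 / 2 * ((∑ i, ∑ j, covD a v x i j * y i * y j)
        + ∑ i, ∑ j, covD a v x j i * y i * y j) := by
      simp only [r00, rSym, ← Finset.sum_add_distrib, Finset.mul_sum]
      exact Finset.sum_congr rfl fun i _ => Finset.sum_congr rfl fun j _ => by ring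
    rw [hhalf, hswap]
    ring
  have hchr : 2 * (v x ⬝ᵥ alphaG a x y) = ∑ i, ∑ j, (∑ k, v x k * chr a x k i j) * y i * y j := by
    simp only [dotProduct, alphaG, Finset.mul_sum, Finset.sum_mul]
    rw [← Finset.sum_comm_cycle]
    exact Finset.sum_congr rfl fun i _ => Finset.sum_congr rfl fun j _ =>
      Finset.sum_congr rfl fun k _ => by ring
  have hfderiv : fderiv ℝ (fun z => oneForm (v z) y) x y = _ := fderiv_dotProduct_const hv y y
  simp only [hcov, hchr, hfderiv, covD, sub_mul, Finset.sum_sub_distrib]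

end RiemannianSpray

section AlphaBetaGamma

variable {n : ℕ} {A : Matrix (Fin n) (Fin n) ℝ} {b g y : Fin n → ℝ} {Ψ : ℝ → ℝ → ℝ}

theorem posHomogeneous_Fm (A : Matrix (Fin n) (Fin n) ℝ) (b g : Fin n → ℝ) (Ψ : ℝ → ℝ → ℝ) :
    PosHomogeneous 1 (Fm A b g Ψ) := by
  intro t ht y
  simp only [Fm, posHomogeneous_alph A ht, posHomogeneous_sVar A _ ht, pow_zero, one_mul, mul_assoc]

theorem contDiffAt_Fm {k : WithTop ℕ∞} {a : (Fin n → ℝ) → Matrix (Fin n) (Fin n) ℝ}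
    {bv gv : (Fin n → ℝ) → Fin n → ℝ} {x : Fin n → ℝ}
    (ha : ∀ i j, ContDiffAt ℝ k (fun z => a z i j) x)
    (hb : ∀ i, ContDiffAt ℝ k (fun z => bv z i) x) (hg : ∀ i, ContDiffAt ℝ k (fun z => gv z i) x)
    (hA : (a x).PosDef) (hy : y ≠ 0)
    (hΨ : ContDiffAt ℝ k (uncurry Ψ) (sVar (a x) (bv x) y, sVar (a x) (gv x) y)) :
    ContDiffAt ℝ k (uncurry fun z => Fm (a z) (bv z) (gv z) Ψ) (x, y) := by
  have hst := (contDiffAt_sVar ha hb hA hy).prodMk (contDiffAt_sVar ha hg hA hy)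
  exact (contDiffAt_alph ha hA hy).mul (ContDiffAt.comp (g := uncurry Ψ) (x, y) hΨ hst)

theorem hasFDerivAt_Fm (hA : A.PosDef) (hy : y ≠ 0)
    (hΨ : DifferentiableAt ℝ (uncurry Ψ) (sVar A b y, sVar A g y)) :
    HasFDerivAt (Fm A b g Ψ)
      (PiF Ψ (sVar A b y) (sVar A g y) • (alph A y)⁻¹ • dotCLM (A *ᵥ y)
        + Ds Ψ (sVar A b y) (sVar A g y) • dotCLM b
        + Dt Ψ (sVar A b y) (sVar A g y) • dotCLM g) y :=
  hasFDerivAt_mul_comp_div (β := dotCLM b) (γ := dotCLM g) hΨ (hasFDerivAt_alph hA hy)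
    (dotCLM b).hasFDerivAt (dotCLM g).hasFDerivAt (alph_pos hA hy).ne'

theorem hasFDerivAt_fderiv_Fm_apply (hA : A.PosDef) (hy : y ≠ 0)
    (hΨ : ContDiffAt ℝ 2 (uncurry Ψ) (sVar A b y, sVar A g y)) (v : Fin n → ℝ) :
    HasFDerivAt (fun z => fderiv ℝ (Fm A b g Ψ) z v)
      ((alph A y)⁻¹ • dotCLM (PiF Ψ (sVar A b y) (sVar A g y) • hl A (A *ᵥ v) y
        + (hl A b y ⬝ᵥ v * Ds (Ds Ψ) (sVar A b y) (sVar A g y)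
          + hl A g y ⬝ᵥ v * Dt (Ds Ψ) (sVar A b y) (sVar A g y)) • hl A b y
        + (hl A b y ⬝ᵥ v * Dt (Ds Ψ) (sVar A b y) (sVar A g y)
          + hl A g y ⬝ᵥ v * Dt (Dt Ψ) (sVar A b y) (sVar A g y)) • hl A g y)) y := by
  have hsymm := mulVec_dotProduct_comm (isHermitian_iff_isSymm.mp hA.isHermitian)
  have hfst : (fun z => fderiv ℝ (Fm A b g Ψ) z v) =ᶠ[𝓝 y] fun z =>
      PiF Ψ (sVar A b z) (sVar A g z) * sVar A (A *ᵥ v) z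
        + Ds Ψ (sVar A b z) (sVar A g z) * (b ⬝ᵥ v)
        + Dt Ψ (sVar A b z) (sVar A g z) * (g ⬝ᵥ v) := by
    have hcont : ContinuousAt (fun z => (sVar A b z, sVar A g z)) y :=
      (hasFDerivAt_sVar hA hy b).continuousAt.prodMk (hasFDerivAt_sVar hA hy g).continuousAt
    filter_upwards [hcont.eventually (hΨ.eventually (by simp)), isOpen_ne.mem_nhds hy] with z hz hz0
    rw [(hasFDerivAt_Fm hA hz0 (hz.differentiableAt (by simp))).fderiv]
    have hs : sVar A (A *ᵥ v) z = A *ᵥ v ⬝ᵥ z / alph A z := rfl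
    simp [hs, hsymm z v, div_eq_inv_mul]
  refine ((hasFDerivAt_PiF_mul_add (b ⬝ᵥ v) (g ⬝ᵥ v) hΨ (hasFDerivAt_sVar hA hy b)
    (hasFDerivAt_sVar hA hy g) (hasFDerivAt_sVar hA hy (A *ᵥ v))).congr_of_eventuallyEq
    hfst).congr_fderiv (ContinuousLinearMap.ext fun w => ?_)
  simp only [hl_dotProduct hA hy, _root_.add_apply, _root_.smul_apply, dotCLM_apply, add_dotProduct,
    smul_dotProduct, smul_eq_mul]
  ring

/-- The determinant of the system is `ΠΓ`. -/
theorem eq_zero_of_PiF_GammaF_ne_zero {B G Θ p q X Y : ℝ} (hPi : PiF Ψ p q ≠ 0)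
    (hGam : GammaF Ψ B G Θ p q ≠ 0)
    (hX : PiF Ψ p q * X + (X * Ds (Ds Ψ) p q + Y * Dt (Ds Ψ) p q) * (B - p ^ 2)
      + (X * Dt (Ds Ψ) p q + Y * Dt (Dt Ψ) p q) * (Θ - p * q) = 0)
    (hY : PiF Ψ p q * Y + (X * Ds (Ds Ψ) p q + Y * Dt (Ds Ψ) p q) * (Θ - p * q)
      + (X * Dt (Ds Ψ) p q + Y * Dt (Dt Ψ) p q) * (G - q ^ 2) = 0) :
    X = 0 ∧ Y = 0 := by
  have hdet : PiF Ψ p q * GammaF Ψ B G Θ p q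
      = (PiF Ψ p q + (B - p ^ 2) * Ds (Ds Ψ) p q + (Θ - p * q) * Dt (Ds Ψ) p q)
          * (PiF Ψ p q + (Θ - p * q) * Dt (Ds Ψ) p q + (G - q ^ 2) * Dt (Dt Ψ) p q)
        - ((B - p ^ 2) * Dt (Ds Ψ) p q + (Θ - p * q) * Dt (Dt Ψ) p q)
          * ((Θ - p * q) * Ds (Ds Ψ) p q + (G - q ^ 2) * Dt (Ds Ψ) p q) := by
    rw [GammaF, JF]
    field_simp
    ring
  have hne := mul_ne_zero hPi hGam
  constructor
  · refine (mul_eq_zero.mp ?_).resolve_left hne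
    rw [hdet]
    linear_combination
      (PiF Ψ p q + (Θ - p * q) * Dt (Ds Ψ) p q + (G - q ^ 2) * Dt (Dt Ψ) p q) * hX
        - ((B - p ^ 2) * Dt (Ds Ψ) p q + (Θ - p * q) * Dt (Dt Ψ) p q) * hY
  · refine (mul_eq_zero.mp ?_).resolve_left hne
    rw [hdet]
    linear_combination
      (PiF Ψ p q + (B - p ^ 2) * Ds (Ds Ψ) p q + (Θ - p * q) * Dt (Ds Ψ) p q) * hY
        - ((Θ - p * q) * Ds (Ds Ψ) p q + (G - q ^ 2) * Dt (Ds Ψ) p q) * hX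

theorem hl_mulVec_eq_zero (hA : A.PosDef) (hy : y ≠ 0)
    (hΨ : ContDiffAt ℝ 2 (uncurry Ψ) (sVar A b y, sVar A g y))
    (hPi : PiF Ψ (sVar A b y) (sVar A g y) ≠ 0)
    (hGam : GammaF Ψ (quadInv A b b) (quadInv A g g) (quadInv A b g)
      (sVar A b y) (sVar A g y) ≠ 0)
    {v : Fin n → ℝ} (hv : fderiv ℝ (fun z => fderiv ℝ (Fm A b g Ψ) z v) y = 0) :
    hl A (A *ᵥ v) y = 0 := by
  rw [(hasFDerivAt_fderiv_Fm_apply hA hy hΨ v).fderiv] at hv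
  have hcoeff := dotProduct_eq_zero _ fun w =>
    congrArg (· w) ((smul_eq_zero.mp hv).resolve_left (inv_ne_zero (alph_pos hA hy).ne'))
  have hpair (u : Fin n → ℝ) : hl A (A *ᵥ v) y ⬝ᵥ A⁻¹ *ᵥ hl A u y = hl A u y ⬝ᵥ v := by
    rw [hl_dotProduct_inv_mulVec_hl hA hy, quadInv_mulVec_left hA, hl_dotProduct hA hy,
      dotProduct_comm, mul_comm]
  have hb := congrArg (· ⬝ᵥ A⁻¹ *ᵥ hl A b y) hcoeff
  have hg := congrArg (· ⬝ᵥ A⁻¹ *ᵥ hl A g y) hcoeff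
  simp only [add_dotProduct, smul_dotProduct, zero_dotProduct, smul_eq_mul, hpair,
    hl_dotProduct_inv_mulVec_hl hA hy,
    quadInv_comm (isHermitian_iff_isSymm.mp hA.isHermitian) g b] at hb hg
  obtain ⟨hX, hY⟩ := eq_zero_of_PiF_GammaF_ne_zero (X := hl A b y ⬝ᵥ v) (Y := hl A g y ⬝ᵥ v)
    hPi hGam (by linarith) (by linarith)
  simpa [hX, hY, hPi] using hcoeff

theorem eq_zero_of_fderiv_Fm_eq_zero (hA : A.PosDef) (hy : y ≠ 0)
    (hΨ : ContDiffAt ℝ 2 (uncurry Ψ) (sVar A b y, sVar A g y))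
    (hne : Ψ (sVar A b y) (sVar A g y) ≠ 0) (hPi : PiF Ψ (sVar A b y) (sVar A g y) ≠ 0)
    (hGam : GammaF Ψ (quadInv A b b) (quadInv A g g) (quadInv A b g)
      (sVar A b y) (sVar A g y) ≠ 0)
    {v : Fin n → ℝ} (hv : fderiv ℝ (Fm A b g Ψ) y v = 0)
    (hv' : fderiv ℝ (fun z => fderiv ℝ (Fm A b g Ψ) z v) y = 0) : v = 0 := by
  have hl_zero := hl_mulVec_eq_zero hA hy hΨ hPi hGam hv'
  rw [hl_eq hA hy, sub_eq_zero, ← mulVec_smul] at hl_zero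
  have hline := mulVec_injective_of_isUnit hA.isUnit hl_zero
  have hF : Fm A b g Ψ y ≠ 0 := mul_ne_zero (alph_pos hA hy).ne' hne
  have heuler := (posHomogeneous_Fm A b g Ψ).fderiv_apply_self
    (hasFDerivAt_Fm hA hy (hΨ.differentiableAt (by simp))).differentiableAt
  rw [hline, map_smul, heuler, Nat.cast_one, one_mul, smul_eq_mul] at hv
  rw [hline, (mul_eq_zero.mp hv).resolve_right hF, zero_smul]

theorem pd_Fm (hA : A.PosDef) (hy : y ≠ 0)
    (hΨ : DifferentiableAt ℝ (uncurry Ψ) (sVar A b y, sVar A g y)) :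
    pd (Fm A b g Ψ) y = PiF Ψ (sVar A b y) (sVar A g y) • pd (alph A) y
      + Ds Ψ (sVar A b y) (sVar A g y) • b + Dt Ψ (sVar A b y) (sVar A g y) • g := by
  funext i
  simp [pd, (hasFDerivAt_Fm hA hy hΨ).fderiv, (hasFDerivAt_alph hA hy).fderiv]

end AlphaBetaGamma

section Main

variable {n : ℕ} {a : (Fin n → ℝ) → Matrix (Fin n) (Fin n) ℝ} {bv gv : (Fin n → ℝ) → Fin n → ℝ}
  {Ψ : ℝ → ℝ → ℝ} {x y : Fin n → ℝ}

theorem hasFDerivAt_Fm_left (ha : ∀ i j, ContDiffAt ℝ 1 (fun z => a z i j) x)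
    (hb : ∀ i, DifferentiableAt ℝ (fun z => bv z i) x)
    (hg : ∀ i, DifferentiableAt ℝ (fun z => gv z i) x) (hA : (a x).PosDef) (hy : y ≠ 0)
    (hΨ : DifferentiableAt ℝ (uncurry Ψ) (sVar (a x) (bv x) y, sVar (a x) (gv x) y)) :
    HasFDerivAt (fun z => Fm (a z) (bv z) (gv z) Ψ y)
      (PiF Ψ (sVar (a x) (bv x) y) (sVar (a x) (gv x) y) • fderiv ℝ (fun z => alph (a z) y) x
        + Ds Ψ (sVar (a x) (bv x) y) (sVar (a x) (gv x) y)
          • fderiv ℝ (fun z => oneForm (bv z) y) x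
        + Dt Ψ (sVar (a x) (bv x) y) (sVar (a x) (gv x) y)
          • fderiv ℝ (fun z => oneForm (gv z) y) x) x := by
  have hform {v : (Fin n → ℝ) → Fin n → ℝ} (hv : ∀ i, DifferentiableAt ℝ (fun z => v z i) x) :
      HasFDerivAt (fun z => oneForm (v z) y) (fderiv ℝ (fun z => oneForm (v z) y) x) x :=
    (DifferentiableAt.fun_sum fun i _ => (hv i).mul_const (y i)).hasFDerivAt
  have hα := (contDiffAt_left_of_uncurry (contDiffAt_alph ha hA hy)).differentiableAt (by simp)
  exact hasFDerivAt_mul_comp_div (β := fun z => oneForm (bv z) y) (γ := fun z => oneForm (gv z) y)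
    hΨ hα.hasFDerivAt (hform hb) (hform hg) (alph_pos hA hy).ne'

theorem statement14_general (ha : ∀ i j, ContDiffAt ℝ 3 (fun z => a z i j) x)
    (hA : ∀ᶠ z in 𝓝 x, (a z).PosDef) (hb : ∀ i, ContDiffAt ℝ 3 (fun z => bv z i) x)
    (hg : ∀ i, ContDiffAt ℝ 3 (fun z => gv z i) x) (hy : y ≠ 0) {p q : ℝ}
    (hp : p = sVar (a x) (bv x) y) (hq : q = sVar (a x) (gv x) y)
    (hΨ : ContDiffAt ℝ 3 (uncurry Ψ) (p, q)) (hne : Ψ p q ≠ 0) (hPi : PiF Ψ p q ≠ 0)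
    (hGam : GammaF Ψ (quadInv (a x) (bv x) (bv x)) (quadInv (a x) (gv x) (gv x))
      (quadInv (a x) (bv x) (gv x)) p q ≠ 0) :
    Ds Ψ p q * r00 a bv x y + Dt Ψ p q * r00 a gv x y =
      ∑ r, pd (Fm (a x) (bv x) (gv x) Ψ) y r *
        (2 * sprayF (fun z w => Fm (a z) (bv z) (gv z) Ψ w) x y r - 2 * alphaG a x y r) := by
  subst hp hq
  have hAx := hA.self_of_nhds
  have hb' i := (hb i).differentiableAt (by simp)
  have hg' i := (hg i).differentiableAt (by simp)
  have hΨ' := hΨ.differentiableAt (by simp)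
  have hF := contDiffAt_Fm ha hb hg hAx hy hΨ
  have hhom z : PosHomogeneous 1 (Fm (a z) (bv z) (gv z) Ψ) := posHomogeneous_Fm _ _ _ _
  have hF0 : Fm (a x) (bv x) (gv x) Ψ y ≠ 0 := mul_ne_zero (alph_pos hAx hy).ne' hne
  have hF₂ : ContDiffAt ℝ 2 (Fm (a x) (bv x) (gv x) Ψ) y :=
    (contDiffAt_right_of_uncurry hF).of_le (by norm_num)
  have hdet := isUnit_det_gmatF (F := fun z => Fm (a z) (bv z) (gv z) Ψ) hF₂ (hhom x) hF0 fun v =>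
    eq_zero_of_fderiv_Fm_eq_zero hAx hy (hΨ.of_le (by norm_num)) hne hPi hGam
  have hspray := two_mul_pd_dotProduct_sprayF hF hhom hF0 hdet
  have hα := two_mul_pd_alph_dotProduct_alphaG ha hA hy
  have hbase := hasFDerivAt_Fm_left (fun i j => (ha i j).of_le (by norm_num)) hb' hg' hAx hy hΨ'
  change _ = pd (Fm (a x) (bv x) (gv x) Ψ) y ⬝ᵥ
    ((2 : ℝ) • sprayF (fun z => Fm (a z) (bv z) (gv z) Ψ) x y - (2 : ℝ) • alphaG a x y)
  rw [dotProduct_sub, dotProduct_smul, dotProduct_smul, smul_eq_mul, smul_eq_mul, hspray,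
    hbase.fderiv, pd_Fm hAx hy hΨ', r00_eq_fderiv_sub a hb', r00_eq_fderiv_sub a hg']
  simp only [_root_.add_apply, _root_.smul_apply, add_dotProduct, smul_dotProduct, smul_eq_mul,
    ← hα]
  ring

end Main

end

/-- `Ψ_s·^βr_00 + Ψ_s̄·^γr_00 = ℓ_r D^r` with `D^i = 2G^i − 2^αG^i`. -/
theorem statement14
    (n : ℕ) (hn : 2 ≤ n)
    (U : Set (Fin n → ℝ)) (hU : IsOpen U)
    (a : (Fin n → ℝ) → Matrix (Fin n) (Fin n) ℝ)
    (haS : ∀ i j, ContDiffOn ℝ (⊤ : ℕ∞) (fun x => a x i j) U)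
    (haP : ∀ x ∈ U, (a x).PosDef)
    (bv gv : (Fin n → ℝ) → Fin n → ℝ)
    (hbS : ∀ i, ContDiffOn ℝ (⊤ : ℕ∞) (fun x => bv x i) U)
    (hgS : ∀ i, ContDiffOn ℝ (⊤ : ℕ∞) (fun x => gv x i) U)
    (b₀ g₀ : ℝ) (hb₀ : 0 < b₀) (hg₀ : 0 < g₀)
    (hb : ∀ x ∈ U, Real.sqrt (quadInv (a x) (bv x) (bv x)) < b₀)
    (hg : ∀ x ∈ U, Real.sqrt (quadInv (a x) (gv x) (gv x)) < g₀)
    (Ψ : ℝ → ℝ → ℝ)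
    (hΨ : ContDiffOn ℝ (⊤ : ℕ∞) (fun p : ℝ × ℝ => Ψ p.1 p.2)
      (Set.Ioo (-b₀) b₀ ×ˢ Set.Ioo (-g₀) g₀))
    (hΨpos : ∀ p ∈ Set.Ioo (-b₀) b₀ ×ˢ Set.Ioo (-g₀) g₀, 0 < Ψ p.1 p.2)
    (hPipos : ∀ x ∈ U, ∀ y : Fin n → ℝ, y ≠ 0 →
      0 < PiF Ψ (sVar (a x) (bv x) y) (sVar (a x) (gv x) y))
    (hΓpos : ∀ x ∈ U, ∀ y : Fin n → ℝ, y ≠ 0 →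
      0 < GammaF Ψ (quadInv (a x) (bv x) (bv x)) (quadInv (a x) (gv x) (gv x))
          (quadInv (a x) (bv x) (gv x)) (sVar (a x) (bv x) y) (sVar (a x) (gv x) y))
 :
    ∀ x ∈ U, ∀ y : Fin n → ℝ, y ≠ 0 →
      ∀ p q : ℝ, p = sVar (a x) (bv x) y → q = sVar (a x) (gv x) y →
        Ds Ψ p q * r00 a bv x y + Dt Ψ p q * r00 a gv x y =
          ∑ r, pd (Fm (a x) (bv x) (gv x) Ψ) y r *
            (2 * sprayF (fun z w => Fm (a z) (bv z) (gv z) Ψ w) x y r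
              - 2 * alphaG a x y r) := by
  intro x hx y hy p q hp hq
  have hmem : (p, q) ∈ Ioo (-b₀) b₀ ×ˢ Ioo (-g₀) g₀ := by
    rw [hp, hq]
    exact mk_mem_prod (sVar_mem_Ioo (haP x hx) hy (hb x hx)) (sVar_mem_Ioo (haP x hx) hy (hg x hx))
  have three_le : (3 : WithTop ℕ∞) ≤ ((⊤ : ℕ∞) : WithTop ℕ∞) :=
    WithTop.coe_le_coe.2 (le_top : (3 : ℕ∞) ≤ ⊤)
  have smooth {f : (Fin n → ℝ) → ℝ} (hf : ContDiffOn ℝ (⊤ : ℕ∞) f U) : ContDiffAt ℝ 3 f x :=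
    (hf.contDiffAt (hU.mem_nhds hx)).of_le three_le
  exact statement14_general (fun i j => smooth (haS i j))
    (Filter.eventually_of_mem (hU.mem_nhds hx) haP) (fun i => smooth (hbS i))
    (fun i => smooth (hgS i)) hy hp hq
    ((hΨ.contDiffAt ((isOpen_Ioo.prod isOpen_Ioo).mem_nhds hmem)).of_le three_le)
    (hΨpos _ hmem).ne' (by rw [hp, hq]; exact (hPipos x hx y hy).ne')
    (by rw [hp, hq]; exact (hΓpos x hx y hy).ne')
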